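/- Let N, m, k be positive integers with N/2 < k ≤ N. Let S_1,…,S_N be datasets of m labelled points each, let G ⊆ [N] with |G| = k, and let D be a distribution on X×Y with risk functional R. Suppose σ_1,…,σ_N ≥ 0 and σ_G ≥ 0 are reals such that sup_{h∈H} |R(h) − R̂_{S_i}(h)| ≤ σ_i for every i ∈ G, and sup_{h∈H} |R(h) − R̂_{S_G}(h)| ≤ σ_G, where S_G = ∪_{i∈G} S_i. Define T = { i ∈ [N] : d_H(S_i, S_j) ≤ σ_i + σ_j for at least ⌊N/2⌋ indices j ≠ i }. Then G ⊆ T, and the average empirical risk R̂_T(h) = (1/|T|)Σ_{i∈T} R̂_{S_i}(h) satisfies sup_{h∈H} |R̂_T(h) − R(h)| ≤ σ_G + 3·((N−k)/N)·max_{i∈[N]} σ_i. -/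

import Mathlib

open MeasureTheory
open scoped Classical

noncomputable section

variable {X Y : Type*}

/-- The risk (expected loss) of a hypothesis `h` under the distribution `D`. -/
def risk [MeasurableSpace X] [MeasurableSpace Y] (D : Measure (X × Y)) (ℓ : Y → Y → ℝ)
    (h : X → Y) : ℝ :=
  ∫ z, ℓ (h z.1) z.2 ∂D

/-- The empirical risk of `h` on a finite dataset (multiset) `S`. -/
def empRisk (ℓ : Y → Y → ℝ) (S : Multiset (X × Y)) (h : X → Y) : ℝ :=
  (S.map fun z => ℓ (h z.1) z.2).sum / S.card

/-- The multiset of points of a dataset given as a finite tuple. -/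
def toMulti {n : ℕ} (S : Fin n → X × Y) : Multiset (X × Y) :=
  Finset.univ.val.map S

/-- The union of the datasets indexed by `G`. -/
def unionG {N m : ℕ} (S : Fin N → Fin m → X × Y) (G : Finset (Fin N)) : Multiset (X × Y) :=
  ∑ i ∈ G, toMulti (S i)

theorem empRisk_unionG {N m : ℕ} (hm : 0 < m) (ℓ : Y → Y → ℝ)
    (S : Fin N → Fin m → X × Y) (G : Finset (Fin N)) (h : X → Y) :
    (G.card : ℝ) * empRisk ℓ (unionG S G) h = ∑ i ∈ G, empRisk ℓ (toMulti (S i)) h := by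
  have hm' : (m : ℝ) ≠ 0 := by positivity
  have hc : ∀ i, (toMulti (S i)).card = m := by intro i; simp [toMulti]
  have hcu : (unionG S G).card = G.card * m := by
    unfold unionG
    rw [Multiset.card_sum, Finset.sum_congr rfl (fun i _ => hc i)]
    simp
  have hs : ((unionG S G).map fun z => ℓ (h z.1) z.2).sum
      = ∑ i ∈ G, ((toMulti (S i)).map fun z => ℓ (h z.1) z.2).sum := by
    unfold unionG
    induction G using Finset.induction_on with
    | empty => simp
    | insert a s ha ih =>
      rw [Finset.sum_insert ha, Finset.sum_insert ha, Multiset.map_add, Multiset.sum_add]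
      congr 1
      apply ih
      unfold unionG
      rw [Multiset.card_sum, Finset.sum_congr rfl (fun i _ => hc i)]
      simp
  unfold empRisk
  simp only [hs, hcu, hc]
  rw [← Finset.sum_div]
  rcases Finset.eq_empty_or_nonempty G with rfl | hne
  · simp
  · have : (G.card : ℝ) ≠ 0 := by
      have := hne.card_pos
      positivity
    push_cast
    field_simp

theorem avg_bound {N k : ℕ} (hk0 : 0 < k) (G T : Finset (Fin N)) (hG : G.card = k)
    (hGT : G ⊆ T) (e : Fin N → ℝ) (r g σG M : ℝ) (hσG : 0 ≤ σG) (hM : 0 ≤ M)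
    (hg : (k : ℝ) * g = ∑ i ∈ G, e i) (hr : |r - g| ≤ σG)
    (hT : ∀ i ∈ T \ G, |e i - r| ≤ 3 * M) :
    |(∑ i ∈ T, e i) / (T.card : ℝ) - r| ≤ σG + 3 * (((N : ℝ) - k) / N) * M := by
  have hkt : k ≤ T.card := hG ▸ Finset.card_le_card hGT
  have htN : T.card ≤ N := by simpa using Finset.card_le_univ T
  have hk0' : (0 : ℝ) < k := by exact_mod_cast hk0
  have hkt' : (k : ℝ) ≤ T.card := by exact_mod_cast hkt
  have htN' : (T.card : ℝ) ≤ N := by exact_mod_cast htN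
  have ht0 : (0 : ℝ) < T.card := by linarith
  have hN0 : (0 : ℝ) < N := by linarith
  have hcard : ((T \ G).card : ℝ) = T.card - k := by
    have := Finset.card_sdiff_add_card_eq_card hGT
    rw [hG] at this
    rw [← this]; push_cast; ring
  have hsplit : (∑ i ∈ T, e i) - T.card * r = k * (g - r) + ∑ i ∈ T \ G, (e i - r) := by
    rw [← Finset.sum_sdiff hGT, Finset.sum_sub_distrib, Finset.sum_const, nsmul_eq_mul, hcard,
      ← hg]
    ring
  have h1 : |∑ i ∈ T \ G, (e i - r)| ≤ (T.card - k) * (3 * M) := by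
    refine (Finset.abs_sum_le_sum_abs _ _).trans ?_
    refine (Finset.sum_le_sum hT).trans ?_
    rw [Finset.sum_const, nsmul_eq_mul, hcard]
  have h2 : |(k : ℝ) * (g - r)| ≤ T.card * σG := by
    rw [abs_mul, abs_of_pos hk0', abs_sub_comm]
    exact mul_le_mul hkt' hr (abs_nonneg _) ht0.le
  have h3 : ((T.card : ℝ) - k) ≤ T.card * (((N : ℝ) - k) / N) := by
    rw [mul_div_assoc', le_div_iff₀ hN0]
    nlinarith
  have heq : (∑ i ∈ T, e i) / (T.card : ℝ) - r = ((∑ i ∈ T, e i) - T.card * r) / T.card := by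
    field_simp
  rw [heq, hsplit, abs_div, abs_of_pos ht0, div_le_iff₀ ht0]
  have h4 := abs_add_le ((k : ℝ) * (g - r)) (∑ i ∈ T \ G, (e i - r))
  have h5 := mul_le_mul_of_nonneg_right h3 (show 0 ≤ 3 * M by positivity)
  nlinarith

/-- **Deterministic core of the filtering analysis**: if every source in `G` has uniform
deviation at most `σ i` from the true risk, and the pooled dataset `S_G` has uniform
deviation at most `σ_G`, then the trusted set `T` selected by discrepancy-based filtering
contains `G`, and the averaged empirical risk over `T` has uniform deviation at most
`σ_G + 3·((N-k)/N)·max_i σ_i` from the true risk. -/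
theorem discrepancy_filtering_deterministic
    [MeasurableSpace X] [MeasurableSpace Y]
    (D : Measure (X × Y)) [IsProbabilityMeasure D]
    (ℓ : Y → Y → ℝ) (H : Set (X → Y))
    (N m k : ℕ) (hm : 0 < m) (hk1 : N < 2 * k) (hk2 : k ≤ N)
    (S : Fin N → Fin m → X × Y) (G : Finset (Fin N)) (hG : G.card = k)
    (σ : Fin N → ℝ) (σG : ℝ) (hσ : ∀ i, 0 ≤ σ i) (hσG : 0 ≤ σG)
    (hconc : ∀ i ∈ G, ∀ h ∈ H, |risk D ℓ h - empRisk ℓ (toMulti (S i)) h| ≤ σ i)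
    (hconcG : ∀ h ∈ H, |risk D ℓ h - empRisk ℓ (unionG S G) h| ≤ σG) :
    G ⊆ (Finset.univ.filter fun i : Fin N =>
        N / 2 ≤ (Finset.univ.filter fun j : Fin N => j ≠ i ∧
          ∀ h ∈ H, |empRisk ℓ (toMulti (S i)) h - empRisk ℓ (toMulti (S j)) h| ≤
            σ i + σ j).card) ∧
      ∀ h ∈ H,
        |(∑ i ∈ (Finset.univ.filter fun i : Fin N =>
              N / 2 ≤ (Finset.univ.filter fun j : Fin N => j ≠ i ∧
                ∀ h' ∈ H, |empRisk ℓ (toMulti (S i)) h' - empRisk ℓ (toMulti (S j)) h'| ≤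
                  σ i + σ j).card),
            empRisk ℓ (toMulti (S i)) h) /
            ((Finset.univ.filter fun i : Fin N =>
              N / 2 ≤ (Finset.univ.filter fun j : Fin N => j ≠ i ∧
                ∀ h' ∈ H, |empRisk ℓ (toMulti (S i)) h' - empRisk ℓ (toMulti (S j)) h'| ≤
                  σ i + σ j).card).card : ℝ) -
          risk D ℓ h| ≤
        σG + 3 * (((N : ℝ) - k) / N) * ⨆ i : Fin N, σ i := by
  have hN0 : 0 < N := by omega
  have key : G ⊆ (Finset.univ.filter fun i : Fin N =>
        N / 2 ≤ (Finset.univ.filter fun j : Fin N => j ≠ i ∧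
          ∀ h ∈ H, |empRisk ℓ (toMulti (S i)) h - empRisk ℓ (toMulti (S j)) h| ≤
            σ i + σ j).card) := by
    intro i hi
    rw [Finset.mem_filter]
    refine ⟨Finset.mem_univ _, ?_⟩
    have hc : (G.erase i).card = k - 1 := by rw [Finset.card_erase_of_mem hi, hG]
    refine le_trans (show N / 2 ≤ (G.erase i).card by omega) (Finset.card_le_card ?_)
    intro j hj
    rw [Finset.mem_erase] at hj
    rw [Finset.mem_filter]
    refine ⟨Finset.mem_univ _, hj.1, fun h hh => ?_⟩
    have h1 := abs_le.1 (hconc i hi h hh)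
    have h2 := abs_le.1 (hconc j hj.2 h hh)
    rw [abs_le]
    constructor <;> linarith [h1.1, h1.2, h2.1, h2.2]
  refine ⟨key, fun h hh => ?_⟩
  have hle : ∀ i, σ i ≤ ⨆ i : Fin N, σ i := fun i =>
    le_ciSup (Set.finite_range σ).bddAbove i
  have hM : 0 ≤ ⨆ i : Fin N, σ i := (hσ ⟨0, hN0⟩).trans (hle _)
  refine avg_bound (by omega) G _ hG key (fun i => empRisk ℓ (toMulti (S i)) h) _
    (empRisk ℓ (unionG S G) h) σG _ hσG hM (by rw [← hG]; exact empRisk_unionG hm ℓ S G h)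
    (hconcG h hh) ?_
  intro i hi
  rw [Finset.mem_sdiff, Finset.mem_filter] at hi
  obtain ⟨⟨-, hiT⟩, hiG⟩ := hi
  have hex : ∃ j ∈ G, ∀ h ∈ H,
      |empRisk ℓ (toMulti (S i)) h - empRisk ℓ (toMulti (S j)) h| ≤ σ i + σ j := by
    by_contra hcon
    have hsub : (Finset.univ.filter fun j : Fin N => j ≠ i ∧
        ∀ h ∈ H, |empRisk ℓ (toMulti (S i)) h - empRisk ℓ (toMulti (S j)) h| ≤
          σ i + σ j) ⊆ Gᶜ.erase i := by
      intro j hj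
      rw [Finset.mem_filter] at hj
      rw [Finset.mem_erase, Finset.mem_compl]
      exact ⟨hj.2.1, fun hjG => hcon ⟨j, hjG, hj.2.2⟩⟩
    have hc := Finset.card_le_card hsub
    have hiC : i ∈ Gᶜ := Finset.mem_compl.2 hiG
    have hpos : 0 < Gᶜ.card := Finset.card_pos.2 ⟨i, hiC⟩
    rw [Finset.card_erase_of_mem hiC] at hc
    rw [Finset.card_compl, Fintype.card_fin, hG] at hc hpos
    omega
  obtain ⟨j, hjG, hj⟩ := hex
  have h1 := abs_le.1 (hj h hh)
  have h2 := abs_le.1 (hconc j hjG h hh)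
  have h3 := hle i
  have h4 := hle j
  rw [abs_le]
  constructor <;> linarith [h1.1, h1.2, h2.1, h2.2]
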